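/- arXiv:2306.12378 — 2 statements merged into one kernel-verified Lean document; each statement's English description precedes it below -/
import Mathlib

section
/- (Wiener–Lévy theorem for the Hartley transform) Let φ ∈ L¹(ℝ). Then 1 + (H₁ φ)(y) ≠ 0 for all y ∈ ℝ if and only if there exists ℓ ∈ L¹(ℝ) such that (H₁ ℓ)(y) = (H₁ φ)(y)/(1 + (H₁ φ)(y)) for all y ∈ ℝ. -/
open MeasureTheory Real Complex Filter Topology

noncomputable def hartley (f : ℝ → ℂ) (y : ℝ) : ℂ :=
  (1 / Real.sqrt (2 * Real.pi)) *
    ∫ x : ℝ, f x * ((Real.cos (x * y) + Real.sin (x * y) : ℝ) : ℂ)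

/-! Let `ξ ∈ L¹(V)` for a Euclidean space `V`. The bicommutant of the translations in the bounded
operators on `L¹(V)` is a commutative Banach algebra, and it contains the operators of convolution.
A character of this algebra that does not vanish on the convolution operators is bounded and
continuous on the translations, hence restricts there to some `v ↦ exp (-2πi⟪v, w⟫)`, and it sends
convolution by `f` to `𝓕 f w`. If `1 + 𝓕 ξ` has no zero, no character kills `1 + ξ ∗ ·`, so this
operator is invertible, and the solution `k` of `k + ξ ∗ k = ξ` has `𝓕 k = 𝓕 ξ / (1 + 𝓕 ξ)`.
Conversely, such a `k` makes `{w | 1 + 𝓕 ξ w ≠ 0}` clopen, and this set is nonempty by the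
Riemann–Lebesgue lemma.

Up to dilation by `2π`, the Hartley transform of `f` is the Fourier transform of `x ↦ a f(x) + b
f(-x)` with constants `a`, `b` for which this substitution is invertible on `L¹(ℝ)`, so the
equivalence carries over.
-/

section BoundedCharacters

theorem norm_addChar_eq_one_of_bounded {G K : Type*} [AddGroup G] [NormedDivisionRing K]
    {e : AddChar G K} {C : ℝ} (he : ∀ a, ‖e a‖ ≤ C) (a : G) : ‖e a‖ = 1 := by
  have norm_le_one (b : G) : ‖e b‖ ≤ 1 := by
    by_contra! hb
    obtain ⟨n, hn⟩ := pow_unbounded_of_one_lt C hb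
    rw [← norm_pow, ← AddChar.map_nsmul_eq_pow] at hn
    exact (he _).not_gt hn
  have hinv : ‖e a‖ * ‖e (-a)‖ = 1 := by
    rw [← norm_mul, ← AddChar.map_add_eq_mul, add_neg_cancel, AddChar.map_zero_eq_one, norm_one]
  refine le_antisymm (norm_le_one a) ?_
  calc 1 = ‖e a‖ * ‖e (-a)‖ := hinv.symm
    _ ≤ ‖e a‖ := mul_le_of_le_one_right (norm_nonneg _) (norm_le_one _)

theorem exists_circle_addChar_of_bounded {G : Type*} [AddGroup G] [TopologicalSpace G]
    {e : AddChar G ℂ} {C : ℝ} (he : ∀ a, ‖e a‖ ≤ C) (hcont : Continuous e) :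
    ∃ χ : AddChar G Circle, Continuous χ ∧ ∀ a, (χ a : ℂ) = e a := by
  have hmem (a : G) : e a ∈ Submonoid.unitSphere ℂ :=
    mem_sphere_zero_iff_norm.2 (norm_addChar_eq_one_of_bounded he a)
  let χ : AddChar G Circle :=
    { toFun a := ⟨e a, hmem a⟩
      map_zero_eq_one' := Circle.ext (AddChar.map_zero_eq_one e)
      map_add_eq_mul' a b := Circle.ext (AddChar.map_add_eq_mul e a b) }
  exact ⟨χ, hcont.subtype_mk hmem, fun _ => rfl⟩

theorem exists_continuousLinearMap_circleExp_eq {V : Type*} [AddCommGroup V] [TopologicalSpace V]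
    [IsTopologicalAddGroup V] [Module ℝ V] [ContinuousSMul ℝ V] [LocallyConvexSpace ℝ V]
    {χ : AddChar V Circle} (hχ : Continuous χ) :
    ∃ L : V →L[ℝ] ℝ, ∀ v, χ v = Circle.exp (L v) := by
  have : ContractibleSpace V := RealTopologicalVectorSpace.contractibleSpace
  obtain ⟨F, ⟨-, hF⟩, huniq⟩ :=
    Circle.isCoveringMap_exp.existsUnique_continuousMap_lifts ⟨χ, hχ⟩ 0 0 (by simp)
  replace hF (v : V) : Circle.exp (F v) = χ v := congrFun hF v
  -- `v ↦ F (v + w) - F w` is another lift of `χ` vanishing at `0`.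
  have hadd (v w : V) : F (v + w) = F v + F w := by
    let F' : C(V, ℝ) := ⟨fun v => F (v + w) - F w, by fun_prop⟩
    have hF' : F' = F := by
      refine huniq F' ⟨by simp [F'], funext fun v => ?_⟩
      simp [F', Circle.exp_sub, AddChar.map_add_eq_mul, hF]
    exact eq_add_of_sub_eq (DFunLike.congr_fun hF' v)
  exact ⟨(AddMonoidHom.mk' F hadd).toRealLinearMap F.continuous, fun v => (hF v).symm⟩

end BoundedCharacters

section Translation

variable {G : Type*} [AddCommGroup G] [MeasurableSpace G] [MeasurableAdd G] (μ : Measure G)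
  [μ.IsAddRightInvariant]

/-- The translation representation of `G` on `L¹(G, μ)`: `l1Translation μ a f` is the class of
`x ↦ f (x - a)`. It is the representation whose bicommutant carries the proof. -/
noncomputable def l1Translation : AddChar G (Lp ℂ 1 μ →L[ℂ] Lp ℂ 1 μ) where
  toFun a := (Lp.compMeasurePreservingₗᵢ ℂ (fun x => x - a)
    (measurePreserving_sub_right μ a)).toContinuousLinearMap
  map_zero_eq_one' := by
    ext1 f
    refine Lp.ext ((Lp.coeFn_compMeasurePreserving f _).trans ?_)
    simp [Function.comp_def]
  map_add_eq_mul' a b := by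
    ext1 f
    have hb := (measurePreserving_sub_right μ a).quasiMeasurePreserving.ae_eq_comp
      (Lp.coeFn_compMeasurePreserving f (measurePreserving_sub_right μ b))
    refine Lp.ext (((Lp.coeFn_compMeasurePreserving f _).trans ?_).trans
      ((Lp.coeFn_compMeasurePreserving _ (measurePreserving_sub_right μ a)).trans hb).symm)
    simp [Function.comp_def, sub_sub]

theorem l1Translation_coeFn (a : G) (f : Lp ℂ 1 μ) :
    l1Translation μ a f =ᵐ[μ] fun x => f (x - a) :=
  Lp.coeFn_compMeasurePreserving f (measurePreserving_sub_right μ a)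

theorem norm_l1Translation_apply (a : G) (f : Lp ℂ 1 μ) : ‖l1Translation μ a f‖ = ‖f‖ :=
  Lp.norm_compMeasurePreserving f (measurePreserving_sub_right μ a)

end Translation

section Convolution

variable {G : Type*} [AddCommGroup G] [TopologicalSpace G] [IsTopologicalAddGroup G]
  [MeasurableSpace G] [BorelSpace G] (μ : Measure G) [μ.IsAddRightInvariant]
  [IsLocallyFiniteMeasure μ] [μ.InnerRegularCompactLTTop]

theorem continuous_l1Translation_apply (f : Lp ℂ 1 μ) :
    Continuous fun a => l1Translation μ a f := by
  let sub : C(G, C(G, G)) := ContinuousMap.curry ⟨fun p => p.2 - p.1, by fun_prop⟩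
  exact (continuous_const (y := f)).compMeasurePreservingLp sub.continuous
    (measurePreserving_sub_right μ) (by simp)

variable [SecondCountableTopology G]

theorem integrable_smul_l1Translation {f : G → ℂ} (hf : Integrable f μ) (g : Lp ℂ 1 μ) :
    Integrable (fun a => f a • l1Translation μ a g) μ :=
  hf.smul_bdd ‖g‖ (continuous_l1Translation_apply μ g).aestronglyMeasurable
    (.of_forall fun a => (norm_l1Translation_apply μ a g).le)

/-- Convolution on `L¹(G, μ)`, encoded as the Bochner integral `∫ f a • l1Translation μ a g`, so
that a continuous linear map is applied to it by passing under the integral sign. -/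
noncomputable def l1Convolution : Lp ℂ 1 μ →L[ℂ] Lp ℂ 1 μ →L[ℂ] Lp ℂ 1 μ :=
  LinearMap.mkContinuous₂
    (LinearMap.mk₂ ℂ (fun f g => ∫ a, f a • l1Translation μ a g ∂μ)
      (fun f f' g => by
        rw [← integral_add (integrable_smul_l1Translation μ (L1.integrable_coeFn f) g)
          (integrable_smul_l1Translation μ (L1.integrable_coeFn f') g)]
        refine integral_congr_ae ?_
        filter_upwards [Lp.coeFn_add f f'] with a ha
        rw [ha, Pi.add_apply, add_smul])
      (fun c f g => by
        rw [← integral_smul]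
        refine integral_congr_ae ?_
        filter_upwards [Lp.coeFn_smul c f] with a ha
        rw [ha, Pi.smul_apply, smul_assoc])
      (fun f g g' => by
        simp only [map_add, smul_add]
        exact integral_add (integrable_smul_l1Translation μ (L1.integrable_coeFn f) g)
          (integrable_smul_l1Translation μ (L1.integrable_coeFn f) g'))
      (fun c f g => by
        simp only [map_smul, smul_comm _ c]
        exact integral_smul c _))
    1 fun f g => by
      refine (norm_integral_le_integral_norm _).trans_eq ?_
      simp only [norm_smul, norm_l1Translation_apply]
      rw [integral_mul_const, L1.norm_eq_integral_norm f, one_mul]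

theorem l1Convolution_apply (f g : Lp ℂ 1 μ) :
    l1Convolution μ f g = ∫ a, f a • l1Translation μ a g ∂μ :=
  rfl

variable {μ} {F : Type*} [NormedAddCommGroup F] [NormedSpace ℂ F] [CompleteSpace F]

theorem map_l1Convolution (T : Lp ℂ 1 μ →L[ℂ] F) (f g : Lp ℂ 1 μ) :
    T (l1Convolution μ f g) = ∫ a, f a • T (l1Translation μ a g) ∂μ := by
  rw [l1Convolution_apply, ← T.integral_comp_comm
    (integrable_smul_l1Translation μ (L1.integrable_coeFn f) g)]
  simp only [map_smul]

theorem map_l1Convolution_of_map_l1Translation_eq_smul {T : Lp ℂ 1 μ →L[ℂ] F} {e : G → ℂ}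
    (g : Lp ℂ 1 μ) (hT : ∀ a, T (l1Translation μ a g) = e a • T g) (f : Lp ℂ 1 μ) :
    T (l1Convolution μ f g) = (∫ a, f a * e a ∂μ) • T g := by
  simp only [map_l1Convolution, hT, smul_smul, integral_smul_const]

theorem map_l1Convolution_of_commute {T : Lp ℂ 1 μ →L[ℂ] Lp ℂ 1 μ}
    (hT : ∀ a, Commute T (l1Translation μ a)) (f g : Lp ℂ 1 μ) :
    T (l1Convolution μ f g) = l1Convolution μ f (T g) := by
  rw [map_l1Convolution, l1Convolution_apply]
  congr! 3 with a
  exact DFunLike.congr_fun (hT a) g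

theorem l1Translation_mul_l1Convolution (a : G) (f : Lp ℂ 1 μ) :
    l1Translation μ a * l1Convolution μ f = l1Convolution μ (l1Translation μ a f) := by
  ext1 g
  have htranslate (b : G) :
      l1Translation μ a (l1Translation μ b g) = l1Translation μ (a + b) g := by
    rw [AddChar.map_add_eq_mul, mul_apply_eq_comp]
  calc l1Translation μ a (l1Convolution μ f g)
    _ = ∫ b, f b • l1Translation μ a (l1Translation μ b g) ∂μ := map_l1Convolution _ f g
    _ = ∫ b, f b • l1Translation μ (a + b) g ∂μ := by simp only [htranslate]
    _ = ∫ b, f (b - a) • l1Translation μ b g ∂μ := by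
      rw [← integral_sub_right_eq_self _ a]
      simp only [add_sub_cancel]
    _ = l1Convolution μ (l1Translation μ a f) g := by
      refine integral_congr_ae ?_
      filter_upwards [l1Translation_coeFn μ a f] with b hb
      rw [hb]

theorem l1Convolution_assoc (f g h : Lp ℂ 1 μ) :
    l1Convolution μ (l1Convolution μ f g) h = l1Convolution μ f (l1Convolution μ g h) := by
  refine map_l1Convolution_of_commute (T := (l1Convolution μ).flip h) (fun a => ?_) f g
  ext1 g
  exact (DFunLike.congr_fun (l1Translation_mul_l1Convolution a g) h).symm

end Convolution

section Bicommutant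

variable {G : Type*} [AddCommGroup G] [MeasurableSpace G] [MeasurableAdd G] (μ : Measure G)
  [μ.IsAddRightInvariant]

/-- The bicommutant of the translations in the bounded operators on `L¹(G, μ)`: a commutative
Banach algebra containing all convolution operators, to which Gelfand theory applies. -/
noncomputable abbrev translationBicommutant : Subalgebra ℂ (Lp ℂ 1 μ →L[ℂ] Lp ℂ 1 μ) :=
  Subalgebra.centralizer ℂ (Subalgebra.centralizer ℂ (Set.range (l1Translation μ)))

theorem mem_translationBicommutant_of_forall_commute {S : Lp ℂ 1 μ →L[ℂ] Lp ℂ 1 μ}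
    (hS : ∀ T, (∀ a, Commute T (l1Translation μ a)) → Commute T S) :
    S ∈ translationBicommutant μ :=
  Subalgebra.mem_centralizer_iff ℂ |>.2 fun T hT => hS T fun a => (hT _ ⟨a, rfl⟩).symm

noncomputable instance : NormedCommRing (translationBicommutant μ) where
  __ := (inferInstance : NormedRing (translationBicommutant μ))
  mul_comm S T := by
    have hcomm : ∀ x ∈ Set.range (l1Translation μ), ∀ y ∈ Set.range (l1Translation μ),
        x * y = y * x := by
      rintro _ ⟨a, rfl⟩ _ ⟨b, rfl⟩
      rw [← AddChar.map_add_eq_mul, ← AddChar.map_add_eq_mul, add_comm]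
    exact Subtype.ext (Set.centralizer_centralizer_comm_of_comm hcomm S S.2 T T.2)

instance : CompleteSpace (translationBicommutant μ) :=
  (Set.isClosed_centralizer _).completeSpace_coe

/-- The translations, as elements of their bicommutant. -/
noncomputable def translationElement : AddChar G (translationBicommutant μ) where
  toFun a := ⟨l1Translation μ a,
    mem_translationBicommutant_of_forall_commute μ fun _ hT => hT a⟩
  map_zero_eq_one' := Subtype.ext (AddChar.map_zero_eq_one _)
  map_add_eq_mul' a b := Subtype.ext (AddChar.map_add_eq_mul _ a b)

end Bicommutant

section Gelfand

variable {G : Type*} [AddCommGroup G] [TopologicalSpace G] [IsTopologicalAddGroup G]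
  [SecondCountableTopology G] [MeasurableSpace G] [BorelSpace G] {μ : Measure G}
  [μ.IsAddRightInvariant] [IsLocallyFiniteMeasure μ] [μ.InnerRegularCompactLTTop]

variable (μ) in
/-- The regular representation of `L¹(G, μ)`: convolution operators, as elements of the bicommutant
of the translations. -/
noncomputable def convolutionElement : Lp ℂ 1 μ →L[ℂ] translationBicommutant μ :=
  (l1Convolution μ).codRestrict (Subalgebra.toSubmodule (translationBicommutant μ)) fun f =>
    mem_translationBicommutant_of_forall_commute μ fun _ hT =>
      ContinuousLinearMap.ext (map_l1Convolution_of_commute hT f)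

theorem convolutionElement_l1Translation (a : G) (f : Lp ℂ 1 μ) :
    convolutionElement μ (l1Translation μ a f) =
      translationElement μ a * convolutionElement μ f :=
  Subtype.ext (l1Translation_mul_l1Convolution a f).symm

theorem convolutionElement_l1Convolution (f g : Lp ℂ 1 μ) :
    convolutionElement μ (l1Convolution μ f g) =
      convolutionElement μ f * convolutionElement μ g :=
  Subtype.ext (ContinuousLinearMap.ext (l1Convolution_assoc f g))

theorem exists_addChar_apply_convolutionElement_eq_integral
    (φ : WeakDual.characterSpace ℂ (translationBicommutant μ)) {g : Lp ℂ 1 μ}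
    (hg : φ (convolutionElement μ g) ≠ 0) :
    ∃ χ : AddChar G Circle, Continuous χ ∧
      ∀ f : Lp ℂ 1 μ, φ (convolutionElement μ f) = ∫ a, f a * χ a ∂μ := by
  let e : AddChar G ℂ := (φ : translationBicommutant μ →* ℂ).compAddChar (translationElement μ)
  let ℓ : Lp ℂ 1 μ →L[ℂ] ℂ := (WeakDual.CharacterSpace.toCLM φ).comp (convolutionElement μ)
  have hℓ (a : G) : ℓ (l1Translation μ a g) = e a * ℓ g :=
    (congrArg φ (convolutionElement_l1Translation a g)).trans (map_mul φ _ _)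
  have he (a : G) : e a = ℓ (l1Translation μ a g) / ℓ g := eq_div_of_mul_eq hg (hℓ a).symm
  have he_cont : Continuous e := by
    rw [funext he]
    exact (ℓ.continuous.comp (continuous_l1Translation_apply μ g)).div_const _
  have he_bdd (a : G) : ‖e a‖ ≤ ‖ℓ‖ * ‖g‖ / ‖ℓ g‖ := by
    rw [he, norm_div, ← norm_l1Translation_apply μ a g]
    gcongr
    exact ℓ.le_opNorm _
  obtain ⟨χ, hχ, hχe⟩ := exists_circle_addChar_of_bounded he_bdd he_cont
  refine ⟨χ, hχ, fun f => mul_right_cancel₀ hg ?_⟩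
  calc φ (convolutionElement μ f) * φ (convolutionElement μ g)
    _ = φ (convolutionElement μ (l1Convolution μ f g)) := by
      rw [← map_mul, ← convolutionElement_l1Convolution]
    _ = (∫ a, f a * e a ∂μ) * φ (convolutionElement μ g) :=
      map_l1Convolution_of_map_l1Translation_eq_smul (T := ℓ) g hℓ f
    _ = (∫ a, f a * χ a ∂μ) * φ (convolutionElement μ g) := by simp only [hχe]

theorem isUnit_one_add_convolutionElement {f : Lp ℂ 1 μ}
    (hf : ∀ χ : AddChar G Circle, Continuous χ → 1 + ∫ a, f a * χ a ∂μ ≠ 0) :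
    IsUnit (1 + convolutionElement μ f) := by
  by_contra hunit
  obtain ⟨φ, hφ⟩ := WeakDual.CharacterSpace.exists_apply_eq_zero hunit
  rw [map_add, map_one] at hφ
  have hφf : φ (convolutionElement μ f) ≠ 0 := by
    intro h
    simp [h] at hφ
  obtain ⟨χ, hχ, hφχ⟩ := exists_addChar_apply_convolutionElement_eq_integral φ hφf
  exact hf χ hχ (hφχ f ▸ hφ)

theorem exists_add_l1Convolution_eq_self {f : Lp ℂ 1 μ}
    (hf : ∀ χ : AddChar G Circle, Continuous χ → 1 + ∫ a, f a * χ a ∂μ ≠ 0) :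
    ∃ k : Lp ℂ 1 μ, k + l1Convolution μ f k = f := by
  obtain ⟨R, hR⟩ := (isUnit_one_add_convolutionElement hf).exists_right_inv
  exact ⟨(R : Lp ℂ 1 μ →L[ℂ] Lp ℂ 1 μ) f, congrArg (fun S : translationBicommutant μ => S.1 f) hR⟩

end Gelfand

section Fourier

open FourierTransform RealInnerProductSpace

theorem isClopen_setOf_one_add_ne_zero_of_eq_div {X K : Type*} [TopologicalSpace X] [Field K]
    [TopologicalSpace K] [IsTopologicalRing K] [T1Space K] {u v : X → K} (hu : Continuous u)
    (hv : Continuous v) (huv : ∀ x, v x = u x / (1 + u x)) :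
    IsClopen {x | 1 + u x ≠ 0} := by
  -- Where `1 + u` vanishes, the junk value of the division gives `v = 0`.
  have heq : {x | 1 + u x ≠ 0} = {x | (1 - v x) * (1 + u x) = 1} := by
    ext x
    simp only [Set.mem_ofPred_eq, huv]
    refine ⟨fun hx => ?_, fun hx h0 => ?_⟩
    · field_simp
      ring
    · simp [h0] at hx
  refine ⟨?_, (isOpen_compl_singleton (x := (0 : K))).preimage (by fun_prop)⟩
  rw [heq]
  exact isClosed_singleton.preimage (by fun_prop)

variable {V : Type*} [NormedAddCommGroup V] [InnerProductSpace ℝ V] [FiniteDimensional ℝ V]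

theorem exists_fourierChar_neg_inner_eq {χ : AddChar V Circle} (hχ : Continuous χ) :
    ∃ w : V, ∀ v, χ v = 𝐞 (-⟪v, w⟫) := by
  obtain ⟨L, hL⟩ := exists_continuousLinearMap_circleExp_eq hχ
  refine ⟨(InnerProductSpace.toDual ℝ V).symm (-(2 * π)⁻¹ • L), fun v => ?_⟩
  rw [real_inner_comm, InnerProductSpace.toDual_symm_apply, hL, Real.fourierChar_apply']
  congr 1
  simp only [smul_apply, smul_eq_mul]
  field_simp

variable [MeasurableSpace V] [BorelSpace V]

theorem integral_mul_fourierChar_neg_inner (f : V → ℂ) (w : V) :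
    ∫ v, f v * 𝐞 (-⟪v, w⟫) = 𝓕 f w := by
  simp only [Real.fourier_eq, Circle.smul_def, smul_eq_mul, mul_comm]

theorem continuous_fourier {f : V → ℂ} (hf : Integrable f) : Continuous (𝓕 f) :=
  VectorFourier.fourierIntegral_continuous Real.continuous_fourierChar
    (innerSL ℝ).continuous₂ hf

theorem fourier_l1Translation (a : V) (f : Lp ℂ 1 (volume : Measure V)) (w : V) :
    𝓕 (l1Translation volume a f : V → ℂ) w = 𝐞 (-⟪a, w⟫) * 𝓕 (f : V → ℂ) w := by
  have hshift : 𝓕 ((f : V → ℂ) ∘ fun v => v + -a) w = 𝐞 ⟪-a, w⟫ • 𝓕 (f : V → ℂ) w :=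
    congrFun (VectorFourier.fourierIntegral_comp_add_right 𝐞 volume (innerₗ V) f (-a)) w
  rw [Real.fourier_congr_ae (l1Translation_coeFn volume a f)]
  simpa [Circle.smul_def, Function.comp_def, sub_eq_add_neg] using hshift

theorem fourier_l1Convolution (f g : Lp ℂ 1 (volume : Measure V)) (w : V) :
    𝓕 (l1Convolution volume f g : V → ℂ) w = 𝓕 (f : V → ℂ) w * 𝓕 (g : V → ℂ) w := by
  let T : Lp ℂ 1 (volume : Measure V) →L[ℂ] ℂ :=
    (BoundedContinuousFunction.evalCLM ℂ w).comp (Real.Lp.fourierTransformCLM V ℂ)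
  have hT := map_l1Convolution_of_map_l1Translation_eq_smul (T := T) g
    (fun a => fourier_l1Translation a g w) f
  rwa [integral_mul_fourierChar_neg_inner] at hT

theorem exists_integrable_fourier_eq_div {f : V → ℂ} (hf : Integrable f)
    (hne : ∀ w, 1 + 𝓕 f w ≠ 0) :
    ∃ k : V → ℂ, Integrable k ∧ ∀ w, 𝓕 k w = 𝓕 f w / (1 + 𝓕 f w) := by
  have hfourier (w : V) : 𝓕 (hf.toL1 f : V → ℂ) w = 𝓕 f w :=
    Real.fourier_congr_ae hf.coeFn_toL1 w
  obtain ⟨k, hk⟩ := exists_add_l1Convolution_eq_self (f := hf.toL1 f) fun χ hχ => by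
    obtain ⟨w, hw⟩ := exists_fourierChar_neg_inner_eq hχ
    simp only [hw, integral_mul_fourierChar_neg_inner, hfourier]
    exact hne w
  refine ⟨k, L1.integrable_coeFn k, fun w => ?_⟩
  have hsum : 𝓕 (k : V → ℂ) w + 𝓕 f w * 𝓕 (k : V → ℂ) w = 𝓕 f w := calc
    _ = 𝓕 (k : V → ℂ) w + 𝓕 (l1Convolution volume (hf.toL1 f) k : V → ℂ) w := by
      rw [fourier_l1Convolution, hfourier]
    _ = 𝓕 (⇑(k + l1Convolution volume (hf.toL1 f) k)) w :=
      (DFunLike.congr_fun (map_add (Real.Lp.fourierTransformCLM V ℂ) _ _) w).symm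
    _ = 𝓕 f w := by rw [hk, hfourier]
  rw [eq_div_iff (hne w)]
  linear_combination hsum

theorem exists_one_add_fourier_ne_zero [Nontrivial V] (f : V → ℂ) : ∃ w, 1 + 𝓕 f w ≠ 0 := by
  have hlim : Tendsto (fun w => 1 + 𝓕 f w) (cocompact V) (𝓝 (1 + 0)) :=
    (tendsto_integral_exp_inner_smul_cocompact f).const_add 1
  have : NoncompactSpace V := NormedSpace.noncompactSpace ℝ V
  exact (hlim.eventually_ne (by simp)).exists

theorem one_add_fourier_ne_zero_iff [Nontrivial V] {f : V → ℂ} (hf : Integrable f) :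
    (∀ w, 1 + 𝓕 f w ≠ 0) ↔
      ∃ k : V → ℂ, Integrable k ∧ ∀ w, 𝓕 k w = 𝓕 f w / (1 + 𝓕 f w) := by
  refine ⟨exists_integrable_fourier_eq_div hf, fun ⟨k, hk, hkf⟩ => ?_⟩
  have hclopen :=
    isClopen_setOf_one_add_ne_zero_of_eq_div (continuous_fourier hf) (continuous_fourier hk) hkf
  exact Set.eq_univ_iff_forall.1 (hclopen.eq_univ (exists_one_add_fourier_ne_zero f))

end Fourier

section Hartley

open FourierTransform

/-- The combination `a f(x) + b f(-x)` of a function with its reflection. The Fourier and Hartley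
transforms intertwine through such combinations. -/
def reflectionComb {V : Type*} [Neg V] (a b : ℂ) (f : V → ℂ) (x : V) : ℂ :=
  a * f x + b * f (-x)

theorem reflectionComb_reflectionComb {V : Type*} [InvolutiveNeg V] (a b c d : ℂ) (f : V → ℂ) :
    reflectionComb a b (reflectionComb c d f) =
      reflectionComb (a * c + b * d) (a * d + b * c) f := by
  ext x
  simp only [reflectionComb, neg_neg]
  ring

theorem reflectionComb_one_zero {V : Type*} [Neg V] (f : V → ℂ) : reflectionComb 1 0 f = f := by
  ext x
  simp only [reflectionComb, one_mul, zero_mul, add_zero]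

theorem integrable_reflectionComb {V : Type*} [AddGroup V] [MeasurableSpace V]
    [MeasurableNeg V] {μ : Measure V} [μ.IsNegInvariant] {f : V → ℂ} (hf : Integrable f μ)
    (a b : ℂ) : Integrable (reflectionComb a b f) μ :=
  (hf.const_mul a).add (hf.comp_neg.const_mul b)

theorem fourier_reflectionComb {V : Type*} [NormedAddCommGroup V] [InnerProductSpace ℝ V]
    [FiniteDimensional ℝ V] [MeasurableSpace V] [BorelSpace V] {f : V → ℂ} (hf : Integrable f)
    (a b : ℂ) (w : V) :
    𝓕 (reflectionComb a b f) w = a * 𝓕 f w + b * 𝓕 f (-w) := by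
  have hneg : 𝓕 (fun x => f (-x)) w = 𝓕 f (-w) := by
    rw [← Real.fourierInv_eq_fourier_neg, Real.fourierInv_eq_fourier_comp_neg]
  have hadd : 𝓕 (a • f + b • fun x => f (-x)) = 𝓕 (a • f) + 𝓕 (b • fun x => f (-x)) :=
    VectorFourier.fourierIntegral_add Real.continuous_fourierChar (innerSL ℝ).continuous₂
      (hf.smul a) (hf.comp_neg.smul b)
  have hsmul (c : ℂ) (g : V → ℂ) : 𝓕 (c • g) = c • 𝓕 g :=
    VectorFourier.fourierIntegral_const_smul _ _ _ g c
  rw [← hneg]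
  calc 𝓕 (reflectionComb a b f) w
    _ = 𝓕 (a • f + b • fun x => f (-x)) w := rfl
    _ = a * 𝓕 f w + b * 𝓕 (fun x => f (-x)) w := by rw [hadd, hsmul, hsmul]; rfl

theorem cos_add_sin_eq_exp (t : ℝ) :
    ((Real.cos t + Real.sin t : ℝ) : ℂ) =
      (1 + I) / 2 * cexp (-t * I) + (1 - I) / 2 * cexp (t * I) := by
  rw [Complex.exp_mul_I, Complex.exp_mul_I, Complex.cos_neg, Complex.sin_neg]
  push_cast
  linear_combination Complex.sin t * Complex.I_sq

theorem fourier_reflectionComb_eq_hartley {f : ℝ → ℂ} (hf : Integrable f) (w : ℝ) :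
    𝓕 (reflectionComb ((1 + I) / (2 * √(2 * π))) ((1 - I) / (2 * √(2 * π))) f) w =
      hartley f (2 * π * w) := by
  have hfourier (s : ℝ) : 𝓕 f s = ∫ x, f x * cexp (-((x * (2 * π * s) : ℝ) : ℂ) * I) := by
    rw [Real.fourier_real_eq_integral_exp_smul]
    refine integral_congr_ae (.of_forall fun x => ?_)
    simp only [smul_eq_mul, mul_comm (f x)]
    congr 2
    push_cast
    ring
  have hint (s : ℝ) : Integrable fun x => f x * cexp (-((x * (2 * π * s) : ℝ) : ℂ) * I) := by
    refine hf.smul_bdd 1 (by fun_prop) (.of_forall fun x => ?_)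
    rw [← Complex.ofReal_neg, Complex.norm_exp_ofReal_mul_I]
  rw [fourier_reflectionComb hf, hfourier, hfourier, hartley, ← integral_const_mul,
    ← integral_const_mul, ← integral_const_mul,
    ← integral_add ((hint _).const_mul _) ((hint _).const_mul _)]
  refine integral_congr_ae (.of_forall fun x => ?_)
  simp only [cos_add_sin_eq_exp, mul_neg, Complex.ofReal_neg, neg_neg]
  field_simp

theorem exists_integrable_fourier_eq_hartley {f : ℝ → ℂ} (hf : Integrable f) :
    ∃ g : ℝ → ℂ, Integrable g ∧ ∀ w, 𝓕 g w = hartley f (2 * π * w) :=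
  ⟨_, integrable_reflectionComb hf _ _, fourier_reflectionComb_eq_hartley hf⟩

theorem exists_integrable_hartley_eq_fourier {f : ℝ → ℂ} (hf : Integrable f) :
    ∃ g : ℝ → ℂ, Integrable g ∧ ∀ w, hartley g (2 * π * w) = 𝓕 f w := by
  have hsqrt : (√(2 * π) : ℂ) ≠ 0 := by
    rw [Complex.ofReal_ne_zero]
    positivity
  refine ⟨reflectionComb (√(2 * π) * (1 - I) / 2) (√(2 * π) * (1 + I) / 2) f,
    integrable_reflectionComb hf _ _, fun w => ?_⟩
  rw [← fourier_reflectionComb_eq_hartley (integrable_reflectionComb hf _ _),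
    reflectionComb_reflectionComb]
  have hone : (1 + I) / (2 * √(2 * π)) * (√(2 * π) * (1 - I) / 2) +
      (1 - I) / (2 * √(2 * π)) * (√(2 * π) * (1 + I) / 2) = 1 := by
    field_simp
    linear_combination -2 * Complex.I_sq
  have hzero : (1 + I) / (2 * √(2 * π)) * (√(2 * π) * (1 + I) / 2) +
      (1 - I) / (2 * √(2 * π)) * (√(2 * π) * (1 - I) / 2) = 0 := by
    field_simp
    linear_combination 2 * Complex.I_sq
  rw [hone, hzero, reflectionComb_one_zero]

end Hartley

theorem stmt12 (φ : ℝ → ℂ) (hφ : Integrable φ) :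
    (∀ y : ℝ, 1 + hartley φ y ≠ 0) ↔
      ∃ ℓ : ℝ → ℂ, Integrable ℓ ∧
        ∀ y : ℝ, hartley ℓ y = hartley φ y / (1 + hartley φ y) := by
  obtain ⟨ψ, hψ, hψφ⟩ := exists_integrable_fourier_eq_hartley hφ
  have hsurj : Function.Surjective (2 * π * · : ℝ → ℝ) := mul_left_surjective₀ two_pi_pos.ne'
  rw [hsurj.forall]
  simp only [← hψφ]
  rw [one_add_fourier_ne_zero_iff hψ]
  refine ⟨fun ⟨k, hk, hkψ⟩ => ?_, fun ⟨ℓ, hℓ, hℓψ⟩ => ?_⟩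
  · obtain ⟨ℓ, hℓ, hℓk⟩ := exists_integrable_hartley_eq_fourier hk
    exact ⟨ℓ, hℓ, hsurj.forall.2 fun w => by rw [hℓk, hkψ, hψφ]⟩
  · obtain ⟨k, hk, hkℓ⟩ := exists_integrable_fourier_eq_hartley hℓ
    exact ⟨k, hk, fun w => by rw [hkℓ, hℓψ, hψφ]⟩
end

section
/- Let g ∈ C²(ℝ) ∩ L¹(ℝ) with g', g'' ∈ L¹(ℝ) and g(x) → 0, g'(x) → 0 as |x| → ∞. Then for every f ∈ L¹(ℝ), H₁{(1 − d²/dx²)(f ∗_{H₁} g)(x)}(y) = (1 + y²) H₁(f ∗_{H₁} g)(y) for all y ∈ ℝ. -/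
open MeasureTheory Real Complex Filter Topology

noncomputable def Hconv (f g : ℝ → ℂ) (x : ℝ) : ℂ :=
  (1 / (2 * Real.sqrt (2 * Real.pi))) *
    ∫ y : ℝ, f y * (g (x + y) + g (x - y) + g (-x + y) - g (-x - y))

/-!
The Hartley transform turns `f ∗_{H₁} g` into the product `H₁ f · H₁ g` and `g''` into `-y² H₁ g`,
so everything comes down to `(f ∗_{H₁} g)'' = f ∗_{H₁} g''` almost everywhere. Splitting `g` into
its even and odd parts writes `f ∗_{H₁} g` as a sum of two ordinary convolutions, and by Fubini an
ordinary convolution `f ⋆ k` is a primitive of `f ⋆ k'`. It is therefore differentiable everywhere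
when `k'` is continuous and bounded, but in general only almost everywhere (Lebesgue) when `k'` is
merely integrable; this matters for the second derivative, since `g''` may be unbounded and the
integral defining `f ∗_{H₁} g''` may then diverge at some points.
-/

open Set ContinuousLinearMap
open scoped Convolution FourierTransform

lemma bddAbove_range_norm_of_hasDerivAt_of_integrable {E : Type*} [NormedAddCommGroup E]
    [NormedSpace ℝ E] [CompleteSpace E] {k k' : ℝ → E} (hk : ∀ x, HasDerivAt k (k' x) x)
    (hk' : Integrable k') : BddAbove (range fun x ↦ ‖k x‖) := by
  refine ⟨‖k 0‖ + ∫ t, ‖k' t‖, forall_mem_range.2 fun x ↦ ?_⟩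
  have ftc : ∫ t in (0 : ℝ)..x, k' t = k x - k 0 :=
    intervalIntegral.integral_eq_sub_of_hasDerivAt (fun t _ ↦ hk t) hk'.intervalIntegrable
  calc ‖k x‖ = ‖k 0 + ∫ t in (0 : ℝ)..x, k' t‖ := by rw [ftc, add_sub_cancel]
    _ ≤ ‖k 0‖ + ‖∫ t in (0 : ℝ)..x, k' t‖ := norm_add_le _ _
    _ ≤ ‖k 0‖ + ∫ t in uIoc 0 x, ‖k' t‖ := by
      gcongr
      exact intervalIntegral.norm_integral_le_integral_norm_uIoc
    _ ≤ ‖k 0‖ + ∫ t, ‖k' t‖ :=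
      add_le_add_right
        (setIntegral_le_integral hk'.norm (ae_of_all _ fun t ↦ norm_nonneg _)) _

lemma hasDerivAt_comp_neg {𝕜 E : Type*} [NontriviallyNormedField 𝕜] [NormedAddCommGroup E]
    [NormedSpace 𝕜 E] {f : 𝕜 → E} {f' : E} {x : 𝕜} (hf : HasDerivAt f f' (-x)) :
    HasDerivAt (fun x ↦ f (-x)) (-f') x := by
  simpa only [Function.comp_def, neg_one_smul] using hf.scomp x (hasDerivAt_neg x)

section Convolution

variable {𝕜 E E' F : Type*} [RCLike 𝕜]
  [NormedAddCommGroup E] [NormedSpace 𝕜 E]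
  [NormedAddCommGroup E'] [NormedSpace 𝕜 E']
  [NormedAddCommGroup F] [NormedSpace 𝕜 F]

lemma convolutionExists_of_integrable_of_bddAbove {G : Type*} [MeasurableSpace G]
    [AddCommGroup G] [MeasurableAdd₂ G] [MeasurableNeg G] {μ : Measure G} [SFinite μ]
    [μ.IsAddLeftInvariant] (L : E →L[𝕜] E' →L[𝕜] F) {f : G → E} {k : G → E'}
    (hf : Integrable f μ) (hk : BddAbove (range fun x ↦ ‖k x‖))
    (hkm : AEStronglyMeasurable k μ) : ConvolutionExists f k L μ := fun _ ↦
  BddAbove.convolutionExistsAt L (hk.mono (image_subset_range _ _)) .univ (subset_univ _)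
    hf.integrableOn hkm

variable [NormedSpace ℝ E'] [CompleteSpace E']
  (L : E →L[𝕜] E' →L[𝕜] F) {f : ℝ → E} {k k' : ℝ → E'}

lemma convolutionExists_of_hasDerivAt_of_integrable (hf : Integrable f)
    (hk : ∀ x, HasDerivAt k (k' x) x) (hk' : Integrable k') : ConvolutionExists f k L :=
  convolutionExists_of_integrable_of_bddAbove L hf
    (bddAbove_range_norm_of_hasDerivAt_of_integrable hk hk')
    (continuous_iff_continuousAt.2 fun x ↦ (hk x).continuousAt).aestronglyMeasurable

variable [NormedSpace ℝ F] [CompleteSpace F]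

lemma intervalIntegral_convolution_eq_sub (hf : Integrable f)
    (hk : ∀ x, HasDerivAt k (k' x) x) (hk' : Integrable k') (a b : ℝ) :
    ∫ x in a..b, (f ⋆[L] k') x = (f ⋆[L] k) b - (f ⋆[L] k) a := by
  have hint : Integrable (fun p : ℝ × ℝ ↦ L (f p.2) (k' (p.1 - p.2)))
      ((volume.restrict (uIoc a b)).prod volume) :=
    (hf.convolution_integrand L hk').mono_measure
      (Measure.prod_mono Measure.restrict_le_self le_rfl)
  have hex := convolutionExists_of_hasDerivAt_of_integrable L hf hk hk'
  have ftc (t : ℝ) :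
      ∫ x in a..b, L (f t) (k' (x - t)) = L (f t) (k (b - t)) - L (f t) (k (a - t)) := by
    rw [intervalIntegral_comp_comm _ (hk'.comp_sub_right t).intervalIntegrable,
      intervalIntegral.integral_comp_sub_right,
      intervalIntegral.integral_eq_sub_of_hasDerivAt (fun s _ ↦ hk s) hk'.intervalIntegrable,
      map_sub]
  calc ∫ x in a..b, (f ⋆[L] k') x
      = ∫ t, ∫ x in a..b, L (f t) (k' (x - t)) := intervalIntegral_integral_swap hint
    _ = ∫ t, (L (f t) (k (b - t)) - L (f t) (k (a - t))) := by simp only [ftc]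
    _ = (f ⋆[L] k) b - (f ⋆[L] k) a := integral_sub (hex b) (hex a)

lemma convolution_eq_add_intervalIntegral (hf : Integrable f)
    (hk : ∀ x, HasDerivAt k (k' x) x) (hk' : Integrable k') :
    f ⋆[L] k = fun x ↦ (f ⋆[L] k) 0 + ∫ t in (0 : ℝ)..x, (f ⋆[L] k') t := by
  ext x
  rw [intervalIntegral_convolution_eq_sub L hf hk hk', add_sub_cancel]

lemma ae_hasDerivAt_convolution (hf : Integrable f)
    (hk : ∀ x, HasDerivAt k (k' x) x) (hk' : Integrable k') :
    ∀ᵐ x, HasDerivAt (f ⋆[L] k) ((f ⋆[L] k') x) x := by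
  have hloc : LocallyIntegrable (f ⋆[L] k') :=
    (hf.integrable_convolution L hk').locallyIntegrable
  rw [convolution_eq_add_intervalIntegral L hf hk hk']
  filter_upwards [LocallyIntegrable.ae_hasDerivAt_integral hloc] with x hx
  exact (hx 0).const_add _

lemma hasDerivAt_convolution_of_bddAbove (hf : Integrable f)
    (hk : ∀ x, HasDerivAt k (k' x) x) (hk' : Integrable k') (hcont : Continuous k')
    (hbdd : BddAbove (range fun x ↦ ‖k' x‖)) (x : ℝ) :
    HasDerivAt (f ⋆[L] k) ((f ⋆[L] k') x) x := by
  have hc : Continuous (f ⋆[L] k') := hbdd.continuous_convolution_right_of_integrable L hf hcont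
  rw [convolution_eq_add_intervalIntegral L hf hk hk']
  exact (hc.integral_hasStrictDerivAt 0 x).hasDerivAt.const_add _

end Convolution

section Symmetrization

section AddCommGroup

variable {G E : Type*} [InvolutiveNeg G] [AddCommGroup E]

/-- Twice the even part of `g`: the kernel convolved with `f` in `Hconv f g`. -/
def symmetrize (g : G → E) (x : G) : E := g x + g (-x)

/-- Twice the odd part of `g`: the kernel convolved with the reflection of `f` in `Hconv f g`. -/
def antisymmetrize (g : G → E) (x : G) : E := g x - g (-x)

lemma even_symmetrize (g : G → E) : Function.Even (symmetrize g) := fun x ↦ by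
  rw [symmetrize, symmetrize, neg_neg, add_comm]

lemma odd_antisymmetrize (g : G → E) : Function.Odd (antisymmetrize g) := fun x ↦ by
  rw [antisymmetrize, antisymmetrize, neg_neg, neg_sub]

lemma symmetrize_add_antisymmetrize (g : G → E) (x : G) :
    symmetrize g x + antisymmetrize g x = 2 • g x := by
  rw [symmetrize, antisymmetrize, add_add_sub_cancel, two_nsmul]

end AddCommGroup

variable {E : Type*} [NormedAddCommGroup E] {g g' : ℝ → E}

lemma integrable_symmetrize (hg : Integrable g) : Integrable (symmetrize g) :=
  hg.add hg.comp_neg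

lemma integrable_antisymmetrize (hg : Integrable g) : Integrable (antisymmetrize g) :=
  hg.sub hg.comp_neg

variable [NormedSpace ℝ E]

lemma hasDerivAt_symmetrize (hg : ∀ x, HasDerivAt g (g' x) x) (x : ℝ) :
    HasDerivAt (symmetrize g) (antisymmetrize g' x) x := by
  rw [antisymmetrize, sub_eq_add_neg]
  exact (hg x).add (hasDerivAt_comp_neg (hg (-x)))

lemma hasDerivAt_antisymmetrize (hg : ∀ x, HasDerivAt g (g' x) x) (x : ℝ) :
    HasDerivAt (antisymmetrize g) (symmetrize g' x) x := by
  rw [symmetrize, ← sub_neg_eq_add]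
  exact (hg x).sub (hasDerivAt_comp_neg (hg (-x)))

end Symmetrization

section Fourier

variable {V E : Type*} [NormedAddCommGroup V] [InnerProductSpace ℝ V] [FiniteDimensional ℝ V]
  [MeasurableSpace V] [BorelSpace V] [NormedAddCommGroup E] [NormedSpace ℂ E]

lemma fourier_comp_neg (f : V → E) (ξ : V) : 𝓕 (fun x ↦ f (-x)) ξ = 𝓕 f (-ξ) := by
  rw [← Real.fourierInv_eq_fourier_comp_neg, Real.fourierInv_eq_fourier_neg]

lemma even_fourier {f : V → E} (hf : Function.Even f) : Function.Even (𝓕 f) := fun ξ ↦ by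
  rw [← fourier_comp_neg, funext hf]

lemma odd_fourier {f : V → E} (hf : Function.Odd f) : Function.Odd (𝓕 f) := fun ξ ↦ by
  rw [← fourier_comp_neg, funext hf]
  simp only [Real.fourier_eq, smul_neg, integral_neg]

lemma fourier_deriv_deriv {f : ℝ → E} (hf : Integrable f) (hd : Differentiable ℝ f)
    (hf' : Integrable (deriv f)) (hd' : Differentiable ℝ (deriv f))
    (hf'' : Integrable (deriv (deriv f))) (ξ : ℝ) :
    𝓕 (deriv (deriv f)) ξ = (-(2 * π * ξ) ^ 2 : ℂ) • 𝓕 f ξ := by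
  rw [Real.fourier_deriv hf' hd' hf'', Real.fourier_deriv hf hd hf']
  dsimp only
  rw [smul_smul]
  congr 1
  ring_nf
  rw [I_sq]
  ring

end Fourier

section Hartley

lemma ofReal_sqrt_two_pi_ne_zero : (√(2 * π) : ℂ) ≠ 0 :=
  ofReal_ne_zero.2 (Real.sqrt_pos.2 two_pi_pos).ne'

lemma hartley_congr_ae {u v : ℝ → ℂ} (h : u =ᵐ[volume] v) (y : ℝ) :
    hartley u y = hartley v y := by
  rw [hartley, hartley]
  congr 1
  refine integral_congr_ae ?_
  filter_upwards [h] with x hx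
  rw [hx]

lemma integrable_mul_cas {u : ℝ → ℂ} (hu : Integrable u) (y : ℝ) :
    Integrable fun x ↦ u x * ((Real.cos (x * y) + Real.sin (x * y) : ℝ) : ℂ) := by
  refine hu.mul_bdd (c := 2) (Continuous.aestronglyMeasurable (by fun_prop))
    (ae_of_all _ fun x ↦ ?_)
  rw [norm_real]
  exact (norm_add_le _ _).trans
    ((add_le_add (abs_cos_le_one _) (abs_sin_le_one _)).trans_eq one_add_one_eq_two)

lemma hartley_add {u v : ℝ → ℂ} (hu : Integrable u) (hv : Integrable v) (y : ℝ) :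
    hartley (fun x ↦ u x + v x) y = hartley u y + hartley v y := by
  simp only [hartley, add_mul]
  rw [integral_add (integrable_mul_cas hu y) (integrable_mul_cas hv y), mul_add]

lemma hartley_sub {u v : ℝ → ℂ} (hu : Integrable u) (hv : Integrable v) (y : ℝ) :
    hartley (fun x ↦ u x - v x) y = hartley u y - hartley v y := by
  simp only [hartley, sub_mul]
  rw [integral_sub (integrable_mul_cas hu y) (integrable_mul_cas hv y), mul_sub]

lemma hartley_const_mul (c : ℂ) (u : ℝ → ℂ) (y : ℝ) :
    hartley (fun x ↦ c * u x) y = c * hartley u y := by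
  simp only [hartley, mul_assoc, integral_const_mul]
  ring

lemma ofReal_cos_add_sin (x y : ℝ) :
    ((Real.cos (x * y) + Real.sin (x * y) : ℝ) : ℂ) =
      (1 + I) / 2 * 𝐞 (-(x * (y / (2 * π)))) + (1 - I) / 2 * 𝐞 (-(x * -(y / (2 * π)))) := by
  have hphase : 2 * π * (x * (y / (2 * π))) = x * y := by field_simp
  rw [mul_neg, neg_neg, Real.fourierChar_apply, Real.fourierChar_apply, mul_neg, hphase,
    exp_mul_I, exp_mul_I]
  push_cast
  rw [Complex.cos_neg, Complex.sin_neg]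
  ring_nf
  rw [I_sq]
  ring

lemma hartley_eq_fourier {u : ℝ → ℂ} (hu : Integrable u) (y : ℝ) :
    hartley u y = 1 / √(2 * π) *
      ((1 + I) / 2 * 𝓕 u (y / (2 * π)) + (1 - I) / 2 * 𝓕 u (-(y / (2 * π)))) := by
  have hint (ξ : ℝ) : Integrable fun x ↦ 𝐞 (-(x * ξ)) • u x := by
    simpa only [RCLike.inner_apply, conj_trivial, mul_comm] using
      (Real.fourierIntegral_convergent_iff ξ).2 hu
  rw [hartley, Real.fourier_real_eq, Real.fourier_real_eq, ← integral_const_mul ((1 + I) / 2),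
    ← integral_const_mul ((1 - I) / 2),
    ← integral_add ((hint _).const_mul _) ((hint _).const_mul _)]
  congr 2 with x
  rw [ofReal_cos_add_sin, Circle.smul_def, Circle.smul_def, smul_eq_mul, smul_eq_mul]
  ring

lemma hartley_deriv_deriv {g : ℝ → ℂ} (hg : Integrable g) (hd : Differentiable ℝ g)
    (hg' : Integrable (deriv g)) (hd' : Differentiable ℝ (deriv g))
    (hg'' : Integrable (deriv (deriv g))) (y : ℝ) :
    hartley (deriv (deriv g)) y = -y ^ 2 * hartley g y := by
  rw [hartley_eq_fourier hg'', hartley_eq_fourier hg, fourier_deriv_deriv hg hd hg' hd' hg'',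
    fourier_deriv_deriv hg hd hg' hd' hg'']
  have hscale : (2 * π * (y / (2 * π) : ℝ) : ℂ) = y := by
    push_cast
    field_simp
  rw [ofReal_neg, mul_neg, neg_sq, hscale, smul_eq_mul, smul_eq_mul]
  ring

lemma hartley_convolution_of_even {f k : ℝ → ℂ} (hf : Integrable f) (hk : Integrable k)
    (heven : Function.Even k) (y : ℝ) :
    hartley (f ⋆[mul ℂ ℂ] k) y = √(2 * π) * (hartley f y * hartley k y) := by
  rw [hartley_eq_fourier (hf.integrable_convolution _ hk), hartley_eq_fourier hf,
    hartley_eq_fourier hk, Real.fourier_mul_convolution_eq hf hk,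
    Real.fourier_mul_convolution_eq hf hk, even_fourier heven]
  have := ofReal_sqrt_two_pi_ne_zero
  field_simp
  ring

lemma hartley_convolution_comp_neg_of_odd {f k : ℝ → ℂ} (hf : Integrable f)
    (hk : Integrable k) (hodd : Function.Odd k) (y : ℝ) :
    hartley ((fun t ↦ f (-t)) ⋆[mul ℂ ℂ] k) y =
      √(2 * π) * (hartley f y * hartley k y) := by
  have hfneg : Integrable fun t ↦ f (-t) := hf.comp_neg
  rw [hartley_eq_fourier (hfneg.integrable_convolution _ hk), hartley_eq_fourier hf,
    hartley_eq_fourier hk, Real.fourier_mul_convolution_eq hfneg hk,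
    Real.fourier_mul_convolution_eq hfneg hk, odd_fourier hodd, fourier_comp_neg,
    fourier_comp_neg, neg_neg]
  have := ofReal_sqrt_two_pi_ne_zero
  field_simp
  ring_nf
  rw [I_sq]
  ring

end Hartley

section HartleyConvolution

variable {f g g' g'' : ℝ → ℂ}

lemma Hconv_eq_convolution {x : ℝ} (hs : ConvolutionExistsAt f (symmetrize g) x (mul ℂ ℂ))
    (ha : ConvolutionExistsAt (fun t ↦ f (-t)) (antisymmetrize g) x (mul ℂ ℂ)) :
    Hconv f g x = 1 / (2 * √(2 * π)) * ((f ⋆[mul ℂ ℂ] symmetrize g) x +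
      ((fun t ↦ f (-t)) ⋆[mul ℂ ℂ] antisymmetrize g) x) := by
  have hreflect : ((fun t ↦ f (-t)) ⋆[mul ℂ ℂ] antisymmetrize g) x =
      ∫ t, f t * antisymmetrize g (x + t) := by
    rw [convolution_mul, ← integral_neg_eq_self]
    simp only [neg_neg, sub_neg_eq_add]
  have hint : Integrable fun t ↦ f t * antisymmetrize g (x + t) := by
    simpa using ha.integrable.comp_neg
  have hsum := integral_add hs.integrable hint
  simp only [mul_apply'] at hsum
  rw [hreflect, convolution_mul, ← hsum, Hconv]
  congr 2 with t
  rw [symmetrize, antisymmetrize, neg_sub', neg_add']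
  ring_nf

lemma Hconv_ae_eq_convolution (hf : Integrable f) (hg : Integrable g) :
    Hconv f g =ᵐ[volume] fun x ↦ 1 / (2 * √(2 * π)) * ((f ⋆[mul ℂ ℂ] symmetrize g) x +
      ((fun t ↦ f (-t)) ⋆[mul ℂ ℂ] antisymmetrize g) x) := by
  filter_upwards [hf.ae_convolution_exists (mul ℂ ℂ) (integrable_symmetrize hg),
    hf.comp_neg.ae_convolution_exists (mul ℂ ℂ) (integrable_antisymmetrize hg)] with x hs ha
  exact Hconv_eq_convolution hs ha

lemma integrable_Hconv (hf : Integrable f) (hg : Integrable g) : Integrable (Hconv f g) :=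
  (((hf.integrable_convolution _ (integrable_symmetrize hg)).add
    (hf.comp_neg.integrable_convolution _ (integrable_antisymmetrize hg))).const_mul _).congr
      (Hconv_ae_eq_convolution hf hg).symm

lemma hartley_Hconv (hf : Integrable f) (hg : Integrable g) (y : ℝ) :
    hartley (Hconv f g) y = hartley f y * hartley g y := by
  have hS := integrable_symmetrize hg
  have hA := integrable_antisymmetrize hg
  have hsum : hartley (symmetrize g) y + hartley (antisymmetrize g) y = 2 * hartley g y := by
    rw [← hartley_add hS hA, ← hartley_const_mul]
    simp only [symmetrize_add_antisymmetrize, nsmul_eq_mul, Nat.cast_ofNat]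
  rw [hartley_congr_ae (Hconv_ae_eq_convolution hf hg), hartley_const_mul,
    hartley_add (hf.integrable_convolution _ hS) (hf.comp_neg.integrable_convolution _ hA),
    hartley_convolution_of_even hf hS (even_symmetrize g),
    hartley_convolution_comp_neg_of_odd hf hA (odd_antisymmetrize g), ← mul_add, ← mul_add, hsum]
  have := ofReal_sqrt_two_pi_ne_zero
  field_simp

lemma hasDerivAt_Hconv (hf : Integrable f) (hg : ∀ x, HasDerivAt g (g' x) x)
    (hg' : ∀ x, HasDerivAt g' (g'' x) x) (hint' : Integrable g') (hint'' : Integrable g'')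
    (x : ℝ) :
    HasDerivAt (Hconv f g) (1 / (2 * √(2 * π)) * ((f ⋆[mul ℂ ℂ] antisymmetrize g') x +
      ((fun t ↦ f (-t)) ⋆[mul ℂ ℂ] symmetrize g') x)) x := by
  have hS := hasDerivAt_symmetrize hg
  have hA := hasDerivAt_antisymmetrize hg
  have hS' := hasDerivAt_symmetrize hg'
  have hA' := hasDerivAt_antisymmetrize hg'
  have hconv : Hconv f g = fun x ↦ 1 / (2 * √(2 * π)) * ((f ⋆[mul ℂ ℂ] symmetrize g) x +
      ((fun t ↦ f (-t)) ⋆[mul ℂ ℂ] antisymmetrize g) x) := funext fun x ↦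
    Hconv_eq_convolution
      (convolutionExists_of_hasDerivAt_of_integrable _ hf hS (integrable_antisymmetrize hint') x)
      (convolutionExists_of_hasDerivAt_of_integrable _ hf.comp_neg hA
        (integrable_symmetrize hint') x)
  rw [hconv]
  refine .const_mul _ (.add ?_ ?_)
  · exact hasDerivAt_convolution_of_bddAbove _ hf hS (integrable_antisymmetrize hint')
      (continuous_iff_continuousAt.2 fun x ↦ (hA' x).continuousAt)
      (bddAbove_range_norm_of_hasDerivAt_of_integrable hA' (integrable_symmetrize hint'')) x
  · exact hasDerivAt_convolution_of_bddAbove _ hf.comp_neg hA (integrable_symmetrize hint')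
      (continuous_iff_continuousAt.2 fun x ↦ (hS' x).continuousAt)
      (bddAbove_range_norm_of_hasDerivAt_of_integrable hS' (integrable_antisymmetrize hint'')) x

lemma deriv_deriv_Hconv_ae_eq (hf : Integrable f) (hg : ∀ x, HasDerivAt g (g' x) x)
    (hg' : ∀ x, HasDerivAt g' (g'' x) x) (hint' : Integrable g') (hint'' : Integrable g'') :
    deriv (deriv (Hconv f g)) =ᵐ[volume] Hconv f g'' := by
  rw [funext fun x ↦ (hasDerivAt_Hconv hf hg hg' hint' hint'' x).deriv]
  filter_upwards [Hconv_ae_eq_convolution hf hint'',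
    ae_hasDerivAt_convolution (mul ℂ ℂ) hf (hasDerivAt_antisymmetrize hg')
      (integrable_symmetrize hint''),
    ae_hasDerivAt_convolution (mul ℂ ℂ) hf.comp_neg (hasDerivAt_symmetrize hg')
      (integrable_antisymmetrize hint'')] with x hconv hA hS
  rw [hconv]
  exact ((hA.add hS).const_mul _).deriv

end HartleyConvolution

theorem stmt14_general {f g : ℝ → ℂ} (hd : Differentiable ℝ g) (hd' : Differentiable ℝ (deriv g))
    (hg : Integrable g) (hg' : Integrable (deriv g)) (hg'' : Integrable (deriv (deriv g)))
    (hf : Integrable f) (y : ℝ) :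
    hartley (fun x ↦ Hconv f g x - deriv (deriv (Hconv f g)) x) y =
      ((1 + y ^ 2 : ℝ) : ℂ) * hartley (Hconv f g) y := by
  have hae : (fun x ↦ Hconv f g x - deriv (deriv (Hconv f g)) x) =ᵐ[volume]
      fun x ↦ Hconv f g x - Hconv f (deriv (deriv g)) x :=
    (EventuallyEq.refl _ _).sub (deriv_deriv_Hconv_ae_eq hf
      (fun x ↦ (hd x).hasDerivAt) (fun x ↦ (hd' x).hasDerivAt) hg' hg'')
  calc hartley (fun x ↦ Hconv f g x - deriv (deriv (Hconv f g)) x) y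
      = hartley (Hconv f g) y - hartley (Hconv f (deriv (deriv g))) y := by
        rw [hartley_congr_ae hae, hartley_sub (integrable_Hconv hf hg) (integrable_Hconv hf hg'')]
    _ = hartley f y * hartley g y - hartley f y * (-y ^ 2 * hartley g y) := by
        rw [hartley_Hconv hf hg, hartley_Hconv hf hg'', hartley_deriv_deriv hg hd hg' hd' hg'']
    _ = ((1 + y ^ 2 : ℝ) : ℂ) * hartley (Hconv f g) y := by
        rw [hartley_Hconv hf hg]
        push_cast
        ring

theorem stmt14 (g : ℝ → ℂ) (hg2 : ContDiff ℝ 2 g)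
    (hg : Integrable g) (hg' : Integrable (deriv g)) (hg'' : Integrable (deriv (deriv g)))
    (hlim : Tendsto g (cocompact ℝ) (nhds 0))
    (hlim' : Tendsto (deriv g) (cocompact ℝ) (nhds 0))
    (f : ℝ → ℂ) (hf : Integrable f) (y : ℝ) :
    hartley (fun x => Hconv f g x - deriv (deriv (Hconv f g)) x) y =
      ((1 + y ^ 2 : ℝ) : ℂ) * hartley (Hconv f g) y := by
  exact stmt14_general (hg2.differentiable two_ne_zero) hg2.differentiable_deriv_two
    hg hg' hg'' hf y
end
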